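/- arXiv:1311.6175 — 2 statements merged into one kernel-verified Lean document; each statement's English description precedes it below -/
import Mathlib

section
/- Let n be a positive integer. For all α, β ∈ IO_∞(ℤ^n_lex), both of the sets {χ ∈ IO_∞(ℤ^n_lex) : α·χ = β} and {χ ∈ IO_∞(ℤ^n_lex) : χ·α = β} are finite. -/
/-- Composition of partial selfmaps (left map applied first):
`dom (PComp f g) = {x ∈ dom f : f x ∈ dom g}` and `(PComp f g) x = g (f x)`. -/
def PComp {X : Type*} (f g : X → Option X) : X → Option X := fun x => (f x).bind g

/-- The identity partial selfmap (everywhere defined). -/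
def PId {X : Type*} : X → Option X := fun x => some x

/-- A partial selfmap is injective. -/
def PInj {X : Type*} (f : X → Option X) : Prop :=
  ∀ ⦃x y a : X⦄, f x = some a → f y = some a → x = y

/-- A partial selfmap is monotone with respect to the relation `r`. -/
def PMono {X : Type*} (r : X → X → Prop) (f : X → Option X) : Prop :=
  ∀ ⦃x y a b : X⦄, r x y → f x = some a → f y = some b → r a b

/-- The domain of a partial selfmap is cofinite. -/
def DomCof {X : Type*} (f : X → Option X) : Prop := {x | f x = none}.Finite

/-- The range (image) of a partial selfmap is cofinite. -/
def RanCof {X : Type*} (f : X → Option X) : Prop := {y | ∀ x, f x ≠ some y}.Finite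

/-- `IOmap r f` says that `f` is a monotone (w.r.t. `r`) injective partial selfmap
with cofinite domain and cofinite image, i.e. an element of `IO_∞`. -/
def IOmap {X : Type*} (r : X → X → Prop) (f : X → Option X) : Prop :=
  PInj f ∧ PMono r f ∧ DomCof f ∧ RanCof f

/-- The lexicographic order on `L_n × ℤ` (with `L_n = Fin n`):
`(i,m) ≤ (j,k)` iff `i < j`, or `i = j` and `m ≤ k`. -/
def lexLe (n : ℕ) (p q : Fin n × ℤ) : Prop :=
  p.1 < q.1 ∨ (p.1 = q.1 ∧ p.2 ≤ q.2)

/-- The domain of a partial selfmap, as a set. -/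
def pdom {X : Type*} (f : X → Option X) : Set X := {x | ∃ y, f x = some y}

/-- The range (image) of a partial selfmap, as a set. -/
def pran {X : Type*} (f : X → Option X) : Set X := {y | ∃ x, f x = some y}

/-!
The equation `f · χ = g` prescribes `χ` on the range of `f`, and, `χ` being injective, off this
range `χ` can only take values outside the range of `g`. Dually, as `f` is injective, `χ · f = g`
prescribes `χ` on the domain of `g`, and off this domain `χ` can only take values outside the
domain of `f`. Either way `χ` is free at finitely many points only, and has finitely many possible
values at each of them.
-/

section Finiteness

theorem finite_of_eqOn_compl_of_subset_pi {ι : Type*} {α : ι → Type*} {S : Set (∀ i, α i)}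
    {F : Set ι} {V : ∀ i, Set (α i)} (hF : F.Finite) (hV : ∀ i ∈ F, (V i).Finite)
    (hagree : ∀ χ ∈ S, ∀ ψ ∈ S, ∀ i ∉ F, χ i = ψ i) (hmem : S ⊆ F.pi V) : S.Finite := by
  have := hF.to_subtype
  refine Set.Finite.of_injOn (f := F.domRestrict) (t := {u | ∀ i : F, u i ∈ V i})
    (fun _ hχ i => hmem hχ i i.2) ?_ (Set.Finite.pi' fun i => hV i i.2)
  intro χ hχ ψ hψ hrestrict
  funext i
  by_cases hi : i ∈ F
  · exact congrFun hrestrict ⟨i, hi⟩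
  · exact hagree χ hχ ψ hψ i hi

theorem finite_setOf_forall_eq_some_imp_mem {Y : Type*} {T : Set Y} (hT : T.Finite) :
    {o : Option Y | ∀ y, o = some y → y ∈ T}.Finite := by
  refine ((hT.image some).insert none).subset ?_
  rintro (_ | y) hy
  · exact Set.mem_insert _ _
  · exact Set.mem_insert_of_mem _ (Set.mem_image_of_mem some (hy y rfl))

theorem finite_partialMaps_of_eqOn_compl {X Y : Type*} {S : Set (X → Option Y)} {F : Set X}
    {T : Set Y} (hF : F.Finite) (hT : T.Finite) (hagree : ∀ χ ∈ S, ∀ ψ ∈ S, ∀ x ∉ F, χ x = ψ x)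
    (hmem : ∀ χ ∈ S, ∀ x ∈ F, ∀ y, χ x = some y → y ∈ T) : S.Finite :=
  finite_of_eqOn_compl_of_subset_pi hF (fun _ _ => finite_setOf_forall_eq_some_imp_mem hT)
    hagree hmem

end Finiteness

section PartialSelfmaps

variable {X : Type*} {f g χ ψ : X → Option X} {x y z : X}

theorem domCof_iff_finite_compl_pdom : DomCof f ↔ (pdom f)ᶜ.Finite := by
  simp only [DomCof, pdom, Set.compl_ofPred, not_exists, Option.eq_none_iff_forall_ne_some]

theorem ranCof_iff_finite_compl_pran : RanCof f ↔ (pran f)ᶜ.Finite := by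
  simp only [RanCof, pran, Set.compl_ofPred, not_exists]

theorem pComp_apply_of_eq_some (hx : f x = some y) : PComp f g x = g y := by
  simp only [PComp, hx, Option.bind_some]

theorem pComp_apply_eq_some_iff : PComp f g x = some z ↔ ∃ y, f x = some y ∧ g y = some z :=
  Option.bind_eq_some_iff

theorem eqOn_pran_of_pComp_left_eq (h : PComp f χ = PComp f ψ) : Set.EqOn χ ψ (pran f) := by
  rintro y ⟨x, hx⟩
  calc χ y = PComp f χ x := (pComp_apply_of_eq_some hx).symm
    _ = PComp f ψ x := congrFun h x
    _ = ψ y := pComp_apply_of_eq_some hx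

theorem PInj.notMem_pran_pComp (hχ : PInj χ) (hy : y ∉ pran f) (hyz : χ y = some z) :
    z ∉ pran (PComp f χ) := by
  rintro ⟨x, hxz⟩
  obtain ⟨w, hxw, hwz⟩ := pComp_apply_eq_some_iff.1 hxz
  obtain rfl : w = y := hχ hwz hyz
  exact hy ⟨x, hxw⟩

theorem PInj.eqOn_pdom_of_pComp_right_eq (hf : PInj f) (h : PComp χ f = PComp ψ f) :
    Set.EqOn χ ψ (pdom (PComp χ f)) := by
  rintro x ⟨z, hχz⟩
  have hψz : PComp ψ f x = some z := h ▸ hχz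
  obtain ⟨u, hu, huz⟩ := pComp_apply_eq_some_iff.1 hχz
  obtain ⟨v, hv, hvz⟩ := pComp_apply_eq_some_iff.1 hψz
  rw [hu, hv, hf huz hvz]

theorem notMem_pdom_of_notMem_pdom_pComp (hx : x ∉ pdom (PComp χ f)) (hxy : χ x = some y) :
    y ∉ pdom f := by
  rintro ⟨z, hyz⟩
  exact hx ⟨z, pComp_apply_eq_some_iff.2 ⟨y, hxy, hyz⟩⟩

theorem finite_setOf_pComp_left_eq (hf : RanCof f) (hg : RanCof g) :
    {χ | PInj χ ∧ PComp f χ = g}.Finite := by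
  refine finite_partialMaps_of_eqOn_compl (ranCof_iff_finite_compl_pran.1 hf)
    (ranCof_iff_finite_compl_pran.1 hg) ?_ ?_
  · rintro χ ⟨-, hχ⟩ ψ ⟨-, hψ⟩ y hy
    exact eqOn_pran_of_pComp_left_eq (hχ.trans hψ.symm) (Set.notMem_compl_iff.1 hy)
  · rintro χ ⟨hinj, rfl⟩ y hy z hyz
    exact hinj.notMem_pran_pComp hy hyz

theorem finite_setOf_pComp_right_eq (hinj : PInj f) (hf : DomCof f) (hg : DomCof g) :
    {χ | PComp χ f = g}.Finite := by
  refine finite_partialMaps_of_eqOn_compl (domCof_iff_finite_compl_pdom.1 hg)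
    (domCof_iff_finite_compl_pdom.1 hf) ?_ ?_
  · rintro χ rfl ψ hψ x hx
    exact hinj.eqOn_pdom_of_pComp_right_eq hψ.symm (Set.notMem_compl_iff.1 hx)
  · rintro χ rfl x hx y hxy
    exact notMem_pdom_of_notMem_pdom_pComp hx hxy

end PartialSelfmaps

theorem stmt11_general {X : Type*} {f g : X → Option X} (hinj : PInj f) (hfd : DomCof f)
    (hfr : RanCof f) (hgd : DomCof g) (hgr : RanCof g) :
    {χ | PInj χ ∧ PComp f χ = g}.Finite ∧ {χ | PComp χ f = g}.Finite :=
  ⟨finite_setOf_pComp_left_eq hfr hgr, finite_setOf_pComp_right_eq hinj hfd hgd⟩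

/-- For all `α, β ∈ IO_∞(ℤ^n_lex)`, the sets of solutions `χ` of `α·χ = β` and of
`χ·α = β` in `IO_∞(ℤ^n_lex)` are finite. -/
theorem stmt11 (n : ℕ) (hn : 0 < n) (f g : Fin n × ℤ → Option (Fin n × ℤ))
    (hf : IOmap (lexLe n) f) (hg : IOmap (lexLe n) g) :
    {χ : Fin n × ℤ → Option (Fin n × ℤ) | IOmap (lexLe n) χ ∧ PComp f χ = g}.Finite ∧
    {χ : Fin n × ℤ → Option (Fin n × ℤ) | IOmap (lexLe n) χ ∧ PComp χ f = g}.Finite := by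
  obtain ⟨hleft, hright⟩ := stmt11_general hf.1 hf.2.2.1 hf.2.2.2 hg.2.2.1 hg.2.2.2
  exact ⟨hleft.subset fun _ hχ => ⟨hχ.1.1, hχ.2⟩, hright.subset fun _ hχ => hχ.2⟩
end

section
/- Let n be a positive integer. For α ∈ IO_∞(ℤ^n_lex) and i ∈ {1,…,n} write α(i,k) = (i, α^i(k)) for (i,k) ∈ dom α. Then: (a) for every α and every i there exist integers a_i⁻(α) and a_i⁺(α) such that α^i(k) − k = a_i⁻(α) for all sufficiently small integers k and α^i(k) − k = a_i⁺(α) for all sufficiently large integers k; (b) the map H : IO_∞(ℤ^n_lex) → ℤ^{2n} given by H(α) = (a_1⁻(α), a_1⁺(α), …, a_n⁻(α), a_n⁺(α)) satisfies H(α·β) = H(α) + H(β) and is surjective; (c) H(α) = H(β) if and only if α·ε = β·ε for some idempotent ε ∈ IO_∞(ℤ^n_lex). Consequently, the quotient of IO_∞(ℤ^n_lex) by its least group congruence σ is isomorphic to the direct power (ℤ(+))^{2n}. -/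
/-!
A monotone injective partial map of a linear order with cofinite range preserves finiteness of
intervals, since all but finitely many points between `f x` and `f y` are values of `f` at points
between `x` and `y`. In the lexicographic order two points bound a finite interval precisely when
they lie on the same line, so `f` induces a monotone surjection on the `n` lines, which must be the
identity. For all but finitely many `k`, the points `(i, k)` and `(i, k + 1)` are in the domain and
the successor of `f (i, k)` is in the range; then `f (i, k + 1)` is that successor. So the
displacement of `f` along a line is eventually constant in both directions. Two maps with the same
eventual displacements differ at finitely many points only, and composing with the identity
restricted to a cofinite set removes these.
-/

open Filter Function

section PartialMap

variable {X : Type*} {r : X → X → Prop} {f g : X → Option X}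

theorem pComp_eq_some {x y : X} : PComp f g x = some y ↔ ∃ z, f x = some z ∧ g z = some y :=
  Option.bind_eq_some_iff

theorem domCof_iff_eventually : DomCof f ↔ ∀ᶠ x in cofinite, ∃ y, f x = some y := by
  simp only [DomCof, eventually_cofinite, ← Option.ne_none_iff_exists', ne_eq, not_not]

theorem ranCof_iff_eventually : RanCof f ↔ ∀ᶠ y in cofinite, ∃ x, f x = some y := by
  simp only [RanCof, eventually_cofinite, not_exists, ne_eq]

theorem PInj.eventually_apply (hf : PInj f) {p : X → Prop} (hp : ∀ᶠ y in cofinite, p y) :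
    ∀ᶠ x in cofinite, ∀ y, f x = some y → p y := by
  have hfin : (f ⁻¹' (some '' {y | ¬p y})).Finite := by
    refine (Set.Finite.image some hp).preimage ?_
    rintro x ⟨a, -, ha⟩ x' - hxx'
    exact hf ha.symm (hxx' ▸ ha.symm)
  refine hfin.subset fun x hx => ?_
  obtain ⟨y, hxy, hy⟩ : ∃ y, f x = some y ∧ ¬p y := by simpa using hx
  exact ⟨y, hy, hxy.symm⟩

theorem eventually_forall_preimage (f : X → Option X) {p : X → Prop}
    (hp : ∀ᶠ x in cofinite, p x) : ∀ᶠ y in cofinite, ∀ x, f x = some y → p x := by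
  have hfin : (some ⁻¹' (f '' {x | ¬p x})).Finite :=
    (Set.Finite.image f hp).preimage (Option.some_injective X).injOn
  refine hfin.subset fun y hy => ?_
  obtain ⟨x, hxy, hx⟩ : ∃ x, f x = some y ∧ ¬p x := by simpa using hy
  exact ⟨x, hx, hxy⟩

theorem PInj.comp (hf : PInj f) (hg : PInj g) : PInj (PComp f g) := by
  intro x y a hx hy
  obtain ⟨b, hxb, hba⟩ := pComp_eq_some.1 hx
  obtain ⟨c, hyc, hca⟩ := pComp_eq_some.1 hy
  exact hf hxb (hg hba hca ▸ hyc)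

theorem PMono.comp (hf : PMono r f) (hg : PMono r g) : PMono r (PComp f g) := by
  intro x y a b hxy hx hy
  obtain ⟨c, hxc, hca⟩ := pComp_eq_some.1 hx
  obtain ⟨d, hyd, hdb⟩ := pComp_eq_some.1 hy
  exact hg (hf hxy hxc hyd) hca hdb

theorem DomCof.comp (hf : DomCof f) (hinj : PInj f) (hg : DomCof g) : DomCof (PComp f g) := by
  rw [domCof_iff_eventually] at *
  filter_upwards [hf, hinj.eventually_apply hg] with x ⟨z, hz⟩ hx
  obtain ⟨y, hy⟩ := hx z hz
  exact ⟨y, pComp_eq_some.2 ⟨z, hz, hy⟩⟩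

theorem RanCof.comp (hf : RanCof f) (hg : RanCof g) : RanCof (PComp f g) := by
  rw [ranCof_iff_eventually] at *
  filter_upwards [hg, eventually_forall_preimage g hf] with y ⟨z, hz⟩ hy
  obtain ⟨x, hx⟩ := hy z hz
  exact ⟨x, pComp_eq_some.2 ⟨z, hx, hz⟩⟩

theorem IOmap.pInj (hf : IOmap r f) : PInj f := hf.1

theorem IOmap.pMono (hf : IOmap r f) : PMono r f := hf.2.1

theorem IOmap.eventually_mem_dom (hf : IOmap r f) : ∀ᶠ x in cofinite, ∃ y, f x = some y :=
  domCof_iff_eventually.1 hf.2.2.1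

theorem IOmap.eventually_mem_ran (hf : IOmap r f) : ∀ᶠ y in cofinite, ∃ x, f x = some y :=
  ranCof_iff_eventually.1 hf.2.2.2

theorem IOmap.comp (hf : IOmap r f) (hg : IOmap r g) : IOmap r (PComp f g) :=
  let ⟨hfinj, hfmono, hfdom, hfran⟩ := hf
  let ⟨hginj, hgmono, hgdom, hgran⟩ := hg
  ⟨hfinj.comp hginj, hfmono.comp hgmono, hfdom.comp hfinj hgdom, hfran.comp hgran⟩

open Classical in
theorem IOmap.ofSet {s : Set X} (hs : s ∈ cofinite) : IOmap r (PEquiv.ofSet s) := by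
  have hself : ∀ᶠ x in cofinite, PEquiv.ofSet s x = some x := by
    filter_upwards [hs] with x hx using PEquiv.ofSet_eq_some_self_iff.2 hx
  refine ⟨fun x y a hx hy => PEquiv.inj _ hx hy, fun x y a b hxy hx hy => ?_,
    domCof_iff_eventually.2 (hself.mono fun x hx => ⟨x, hx⟩),
    ranCof_iff_eventually.2 (hself.mono fun x hx => ⟨x, hx⟩)⟩
  rwa [(PEquiv.ofSet_eq_some_iff.1 hx).1, (PEquiv.ofSet_eq_some_iff.1 hy).1]

open Classical in
theorem pComp_ofSet_self (s : Set X) :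
    PComp (PEquiv.ofSet s) (PEquiv.ofSet s) = PEquiv.ofSet s := by
  ext x y
  simp only [pComp_eq_some, PEquiv.ofSet_eq_some_iff]
  aesop

theorem exists_idempotent_pComp_eq (h : f =ᶠ[cofinite] g) :
    ∃ e, IOmap r e ∧ PComp e e = e ∧ PComp f e = PComp g e := by
  classical
  have hs := (eventually_forall_preimage f h).and (eventually_forall_preimage g h)
  refine ⟨_, IOmap.ofSet hs, pComp_ofSet_self _, ?_⟩
  ext x y
  simp only [pComp_eq_some, PEquiv.ofSet_eq_some_iff]
  constructor
  · rintro ⟨_, hx, rfl, hy⟩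
    exact ⟨y, hy.1 x hx ▸ hx, rfl, hy⟩
  · rintro ⟨_, hx, rfl, hy⟩
    exact ⟨y, (hy.2 x hx).trans hx, rfl, hy⟩

end PartialMap

section TotalOrder

variable {X : Type*} {r : X → X → Prop} [Std.Total r] [Std.Antisymm r] {f : X → Option X}
  {x y a b : X}

theorem PMono.rel_iff (hf : PMono r f) (hinj : PInj f) (hx : f x = some a) (hy : f y = some b) :
    r a b ↔ r x y := by
  refine ⟨fun hab => (Std.Total.total (r := r) x y).elim id fun hyx => ?_, fun hxy => hf hxy hx hy⟩
  obtain rfl : a = b := Std.Antisymm.antisymm a b hab (hf hyx hy hx)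
  obtain rfl : x = y := hinj hx hy
  exact hyx

theorem PMono.finite_interval (hf : PMono r f) (hinj : PInj f) (hran : RanCof f)
    (hx : f x = some a) (hy : f y = some b) (hfin : {z | r x z ∧ r z y}.Finite) :
    {c | r a c ∧ r c b}.Finite := by
  have hpre := eventually_forall_preimage f hfin.compl_mem_cofinite
  refine Set.Finite.subset ((ranCof_iff_eventually.1 hran).and hpre) fun c hc hc' => ?_
  obtain ⟨⟨z, hz⟩, hout⟩ := hc'
  exact hout z hz ⟨(hf.rel_iff hinj hx hz).1 hc.1, (hf.rel_iff hinj hz hy).1 hc.2⟩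

end TotalOrder

section Lines

variable {ι : Type*} {p : ι × ℤ → Prop}

theorem eventually_line (hp : ∀ᶠ x in cofinite, p x) (i : ι) : ∀ᶠ k in cofinite, p (i, k) :=
  (Prod.mk_right_injective i).tendsto_cofinite.eventually hp

theorem eventually_cofinite_of_lines [Finite ι]
    (h : ∀ i, (∀ᶠ k in atBot, p (i, k)) ∧ ∀ᶠ k in atTop, p (i, k)) : ∀ᶠ x in cofinite, p x := by
  have hline (i : ι) : {k | ¬p (i, k)}.Finite := by
    rw [← eventually_cofinite, Int.cofinite_eq]
    exact eventually_sup.2 (h i)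
  refine (Set.finite_iUnion fun i => (hline i).image (Prod.mk i)).subset ?_
  exact fun x hx => Set.mem_iUnion.2 ⟨x.1, x.2, hx, rfl⟩

end Lines

theorem eq_id_of_monotone_of_surjective {α : Type*} [LinearOrder α] [Finite α] {φ : α → α}
    (hmono : Monotone φ) (hsurj : Surjective φ) : φ = id := by
  have hstrict := hmono.strictMono_of_injective (Finite.injective_iff_surjective.2 hsurj)
  exact congrArg DFunLike.coe
    (Subsingleton.elim (hstrict.orderIsoOfSurjective φ hsurj) (OrderIso.refl α))

section LexOrder

variable {n : ℕ} {f : Fin n × ℤ → Option (Fin n × ℤ)} {i : Fin n}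

theorem lexLe_iff_toLex_le {p q : Fin n × ℤ} : lexLe n p q ↔ toLex p ≤ toLex q :=
  Prod.Lex.toLex_le_toLex.symm

instance : Std.Total (lexLe n) where
  total _ _ := by simpa only [lexLe_iff_toLex_le] using le_total _ _

instance : Std.Antisymm (lexLe n) where
  antisymm _ _ hpq hqp :=
    toLex.injective (le_antisymm (lexLe_iff_toLex_le.1 hpq) (lexLe_iff_toLex_le.1 hqp))

theorem lexLe.fst_le {p q : Fin n × ℤ} (h : lexLe n p q) : p.1 ≤ q.1 :=
  h.elim le_of_lt fun h => h.1.le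

theorem lexLe_line_iff {k m : ℤ} : lexLe n (i, k) (i, m) ↔ k ≤ m := by
  simp [lexLe]

theorem lexLe.finite_interval_iff {p q : Fin n × ℤ} (hpq : lexLe n p q) :
    {z | lexLe n p z ∧ lexLe n z q}.Finite ↔ p.1 = q.1 := by
  obtain ⟨i, k⟩ := p
  obtain ⟨j, m⟩ := q
  constructor
  · refine fun hfin => hpq.fst_le.eq_of_not_lt fun hij => ?_
    have hray : Prod.mk i '' Set.Ici k ⊆ {z | lexLe n (i, k) z ∧ lexLe n z (j, m)} := by
      rintro _ ⟨l, hl, rfl⟩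
      exact ⟨lexLe_line_iff.2 hl, Or.inl hij⟩
    exact (Set.Ici_infinite k).image (Prod.mk_right_injective i).injOn (hfin.subset hray)
  · rintro rfl
    refine ((Set.finite_Icc k m).image (Prod.mk i)).subset ?_
    rintro ⟨s, l⟩ ⟨hl, hl'⟩
    obtain rfl : i = s := le_antisymm hl.fst_le hl'.fst_le
    exact ⟨l, ⟨lexLe_line_iff.1 hl, lexLe_line_iff.1 hl'⟩, rfl⟩

theorem IOmap.fst_eq_fst (hf : IOmap (lexLe n) f) {x y a b : Fin n × ℤ} (hx : f x = some a)
    (hy : f y = some b) (hxy : x.1 = y.1) : a.1 = b.1 := by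
  wlog hle : lexLe n x y generalizing x y a b
  · exact (this hy hx hxy.symm ((Std.Total.total x y).resolve_left hle)).symm
  have hfin := hle.finite_interval_iff.2 hxy
  exact (hf.pMono hle hx hy).finite_interval_iff.1
    (hf.pMono.finite_interval hf.pInj hf.2.2.2 hx hy hfin)

theorem IOmap.fst_eq (hf : IOmap (lexLe n) f) {x a : Fin n × ℤ} (hx : f x = some a) :
    a.1 = x.1 := by
  have hdom (i : Fin n) : ∃ k y, f (i, k) = some y :=
    (eventually_line hf.eventually_mem_dom i).exists
  choose k y hy using hdom
  have hline {z b : Fin n × ℤ} (hz : f z = some b) : (y z.1).1 = b.1 :=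
    hf.fst_eq_fst (hy z.1) hz rfl
  have hmono : Monotone fun i => (y i).1 := fun i j hij => by
    obtain rfl | hlt := hij.eq_or_lt
    · exact le_rfl
    · exact (hf.pMono (Or.inl hlt) (hy i) (hy j)).fst_le
  have hsurj : Surjective fun i => (y i).1 := fun j => by
    obtain ⟨m, z, hz⟩ := (eventually_line hf.eventually_mem_ran j).exists
    exact ⟨z.1, hline hz⟩
  rw [← hline hx]
  exact congrFun (eq_id_of_monotone_of_surjective hmono hsurj) x.1

theorem IOmap.apply_succ (hf : IOmap (lexLe n) f) {k m : ℤ} (hk : f (i, k) = some (i, m))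
    (hdom : ∃ y, f (i, k + 1) = some y) (hran : ∃ x, f x = some (i, m + 1)) :
    f (i, k + 1) = some (i, m + 1) := by
  obtain ⟨⟨j, m'⟩, hm'⟩ := hdom
  obtain ⟨⟨s, k'⟩, hk'⟩ := hran
  obtain rfl : j = i := hf.fst_eq hm'
  obtain rfl : j = s := hf.fst_eq hk'
  have hmono {p q u v : ℤ} (hp : f (j, p) = some (j, u)) (hq : f (j, q) = some (j, v)) :
      u ≤ v ↔ p ≤ q := by
    simpa only [lexLe_line_iff] using hf.pMono.rel_iff hf.pInj hp hq
  have hm_lt : m < m' := not_le.1 fun h => by simpa using (hmono hm' hk).1 h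
  have hk_lt : k < k' := not_le.1 fun h => by simpa using (hmono hk' hk).2 h
  have hm'_le : m' ≤ m + 1 := (hmono hm' hk').2 hk_lt
  rw [hm', le_antisymm hm'_le hm_lt]

end LexOrder

section EventuallyConst

variable {α : Type*} {d : ℤ → α}

theorem exists_eventually_atTop_eq (h : ∀ᶠ k in atTop, d (k + 1) = d k) :
    ∃ c, ∀ᶠ k in atTop, d k = c := by
  obtain ⟨K, hK⟩ := eventually_atTop.1 h
  refine ⟨d K, eventually_atTop.2 ⟨K, fun k hk => ?_⟩⟩
  induction k, hk using Int.leInduction with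
  | base => rfl
  | succ k hk ih => exact (hK k hk).trans ih

theorem exists_eventually_atBot_eq (h : ∀ᶠ k in atBot, d (k + 1) = d k) :
    ∃ c, ∀ᶠ k in atBot, d k = c := by
  obtain ⟨K, hK⟩ := eventually_atBot.1 h
  refine ⟨d K, eventually_atBot.2 ⟨K, fun k hk => ?_⟩⟩
  induction k, hk using Int.leInductionDown with
  | base => rfl
  | pred k hk ih =>
    have hpred : d k = d (k - 1) := by simpa using hK (k - 1) (by lia)
    exact hpred.symm.trans ih

end EventuallyConst

section Shift

variable {ι : Type*} {l : Filter ℤ} {f g : ι × ℤ → Option (ι × ℤ)} {i : ι} {a b : ℤ}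

/-- `f` translates line `i` by `a` eventually along `l`; the constants `a_i⁻` and `a_i⁺` of the
paper are given by `l = atBot` and `l = atTop`. -/
def HasShift (l : Filter ℤ) (f : ι × ℤ → Option (ι × ℤ)) (i : ι) (a : ℤ) : Prop :=
  ∀ᶠ k in l, f (i, k) = some (i, k + a)

theorem HasShift.unique [l.NeBot] (ha : HasShift l f i a) (hb : HasShift l f i b) : a = b := by
  obtain ⟨k, hka, hkb⟩ := (ha.and hb).exists
  simpa using hka.symm.trans hkb

theorem HasShift.comp (hf : HasShift l f i a) (hg : HasShift l g i b)
    (hl : Tendsto (· + a) l l) : HasShift l (PComp f g) i (a + b) := by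
  filter_upwards [hf, hl.eventually hg] with k hfk hgk
  exact pComp_eq_some.2 ⟨_, hfk, by rw [hgk, add_assoc]⟩

theorem HasShift.eventually_mem_dom (hf : HasShift l f i a) : ∀ᶠ k in l, ∃ y, f (i, k) = some y :=
  hf.mono fun _ hk => ⟨_, hk⟩

theorem HasShift.eventually_mem_ran (hf : HasShift l f i a) (hl : Tendsto (· + -a) l l) :
    ∀ᶠ m in l, ∃ x, f x = some (i, m) := by
  filter_upwards [hl.eventually hf] with m hm
  exact ⟨_, by rw [hm, neg_add_cancel_right]⟩

/-- The displacement `α^i(k) - k` of the point `(i, k)`, undefined outside the domain. It compares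
second coordinates only, and is meant for maps that preserve the first coordinate. -/
def displacement (f : ι × ℤ → Option (ι × ℤ)) (i : ι) (k : ℤ) : Option ℤ :=
  (f (i, k)).map fun y => y.2 - k

end Shift

section Existence

variable {n : ℕ} {f : Fin n × ℤ → Option (Fin n × ℤ)}

theorem IOmap.displacement_eq_some (hf : IOmap (lexLe n) f) {i : Fin n} {k a : ℤ} :
    displacement f i k = some a ↔ f (i, k) = some (i, k + a) := by
  simp only [displacement, Option.map_eq_some_iff]
  constructor
  · rintro ⟨⟨j, m⟩, hm, rfl⟩
    obtain rfl : j = i := hf.fst_eq hm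
    simpa using hm
  · exact fun h => ⟨_, h, by simp⟩

theorem IOmap.eventually_exists_displacement (hf : IOmap (lexLe n) f) (i : Fin n) :
    ∀ᶠ k in cofinite, ∃ a, displacement f i k = some a := by
  filter_upwards [eventually_line hf.eventually_mem_dom i] with k hk
  obtain ⟨y, hy⟩ := hk
  exact ⟨y.2 - k, Option.map_eq_some_iff.2 ⟨y, hy, rfl⟩⟩

theorem IOmap.eventually_displacement_succ (hf : IOmap (lexLe n) f) (i : Fin n) :
    ∀ᶠ k in cofinite, displacement f i (k + 1) = displacement f i k := by
  have hdomsucc : ∀ᶠ k in cofinite, ∃ y, f (i, k + 1) = some y :=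
    (add_left_injective 1).tendsto_cofinite.eventually (eventually_line hf.eventually_mem_dom i)
  have hsucc : Injective (Prod.map id (· + 1) : Fin n × ℤ → Fin n × ℤ) :=
    injective_id.prodMap (add_left_injective 1)
  have hransucc : ∀ᶠ y : Fin n × ℤ in cofinite, ∃ x, f x = some (y.1, y.2 + 1) :=
    hsucc.tendsto_cofinite.eventually hf.eventually_mem_ran
  filter_upwards [hf.eventually_exists_displacement i, hdomsucc,
    eventually_line (hf.pInj.eventually_apply hransucc) i] with k ⟨a, ha⟩ hk hran
  have hfk := hf.displacement_eq_some.1 ha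
  rw [ha, hf.displacement_eq_some, hf.apply_succ hfk hk (hran _ hfk), add_right_comm]

theorem IOmap.exists_hasShift (hf : IOmap (lexLe n) f) {l : Filter ℤ} [l.NeBot]
    (hl : l ≤ cofinite) {i : Fin n} (hconst : ∃ c, ∀ᶠ k in l, displacement f i k = c) :
    ∃ a, HasShift l f i a := by
  obtain ⟨c, hc⟩ := hconst
  obtain ⟨k, hk, a, ha⟩ := (hc.and (hl (hf.eventually_exists_displacement i))).exists
  obtain rfl : c = some a := hk.symm.trans ha
  exact ⟨a, hc.mono fun _ => hf.displacement_eq_some.1⟩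

end Existence

section EndShifts

variable {ι : Type*} {f g : ι × ℤ → Option (ι × ℤ)} {v w : ι → ℤ × ℤ}

/-- `v i` is the pair `(a_i⁻, a_i⁺)` of eventual translation constants of `f` on every line `i`,
so that `v` is the value of the homomorphism `H` at `f`. -/
def HasEndShifts (f : ι × ℤ → Option (ι × ℤ)) (v : ι → ℤ × ℤ) : Prop :=
  ∀ i, HasShift atBot f i (v i).1 ∧ HasShift atTop f i (v i).2

theorem IOmap.exists_hasEndShifts {n : ℕ} {f : Fin n × ℤ → Option (Fin n × ℤ)}
    (hf : IOmap (lexLe n) f) : ∃ v, HasEndShifts f v := by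
  have hbot : (atBot : Filter ℤ) ≤ cofinite := Int.cofinite_eq ▸ le_sup_left
  have htop : (atTop : Filter ℤ) ≤ cofinite := Int.cofinite_eq ▸ le_sup_right
  choose a ha using fun i => hf.exists_hasShift hbot
    (exists_eventually_atBot_eq (hbot (hf.eventually_displacement_succ i)))
  choose b hb using fun i => hf.exists_hasShift htop
    (exists_eventually_atTop_eq (htop (hf.eventually_displacement_succ i)))
  exact ⟨fun i => (a i, b i), fun i => ⟨ha i, hb i⟩⟩

theorem HasEndShifts.unique (hv : HasEndShifts f v) (hw : HasEndShifts f w) : v = w :=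
  funext fun i => Prod.ext ((hv i).1.unique (hw i).1) ((hv i).2.unique (hw i).2)

theorem HasEndShifts.comp (hf : HasEndShifts f v) (hg : HasEndShifts g w) :
    HasEndShifts (PComp f g) (v + w) := fun i =>
  ⟨(hf i).1.comp (hg i).1 (tendsto_atBot_add_const_right _ _ tendsto_id),
    (hf i).2.comp (hg i).2 (tendsto_atTop_add_const_right _ _ tendsto_id)⟩

variable [Finite ι]

theorem HasEndShifts.eventuallyEq (hf : HasEndShifts f v) (hg : HasEndShifts g v) :
    f =ᶠ[cofinite] g := by
  refine eventually_cofinite_of_lines fun i => ⟨?_, ?_⟩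
  · filter_upwards [(hf i).1, (hg i).1] with k hfk hgk using hfk.trans hgk.symm
  · filter_upwards [(hf i).2, (hg i).2] with k hfk hgk using hfk.trans hgk.symm

theorem HasEndShifts.domCof (hf : HasEndShifts f v) : DomCof f :=
  domCof_iff_eventually.2 <| eventually_cofinite_of_lines fun i =>
    ⟨(hf i).1.eventually_mem_dom, (hf i).2.eventually_mem_dom⟩

theorem HasEndShifts.ranCof (hf : HasEndShifts f v) : RanCof f :=
  ranCof_iff_eventually.2 <| eventually_cofinite_of_lines fun i =>
    ⟨(hf i).1.eventually_mem_ran (tendsto_atBot_add_const_right _ _ tendsto_id),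
      (hf i).2.eventually_mem_ran (tendsto_atTop_add_const_right _ _ tendsto_id)⟩

end EndShifts

section Realization

/-- A partial map with prescribed end shifts `v`, for the surjectivity of `H`. The points
`(i, k)` with `0 ≤ k < |a - b|`, where `v i = (a, b)`, are left out of the domain so that the
images of the two ends of the line do not overlap. -/
def endShiftMap {ι : Type*} (v : ι → ℤ × ℤ) (x : ι × ℤ) : Option (ι × ℤ) :=
  if x.2 < 0 then some (x.1, x.2 + (v x.1).1)
  else if |(v x.1).1 - (v x.1).2| ≤ x.2 then some (x.1, x.2 + (v x.1).2)
  else none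

theorem hasEndShifts_endShiftMap {ι : Type*} (v : ι → ℤ × ℤ) :
    HasEndShifts (endShiftMap v) v := by
  refine fun i => ⟨?_, ?_⟩
  · filter_upwards [eventually_lt_atBot 0] with k hk
    simp only [endShiftMap, if_pos hk]
  · filter_upwards [eventually_ge_atTop |(v i).1 - (v i).2|] with k hk
    have hk₀ : ¬k < 0 := ((abs_nonneg _).trans hk).not_gt
    simp only [endShiftMap, if_neg hk₀, if_pos hk]

theorem endShiftMap_fst {ι : Type*} {v : ι → ℤ × ℤ} {x a : ι × ℤ}
    (hx : endShiftMap v x = some a) : a.1 = x.1 := by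
  grind [endShiftMap]

theorem endShiftMap_le_iff {ι : Type*} {v : ι → ℤ × ℤ} {i : ι} {k l m p : ℤ}
    (hk : endShiftMap v (i, k) = some (i, m)) (hl : endShiftMap v (i, l) = some (i, p)) :
    m ≤ p ↔ k ≤ l := by
  grind [endShiftMap]

theorem ioMap_endShiftMap {n : ℕ} (v : Fin n → ℤ × ℤ) : IOmap (lexLe n) (endShiftMap v) := by
  refine ⟨?_, ?_, (hasEndShifts_endShiftMap v).domCof, (hasEndShifts_endShiftMap v).ranCof⟩
  · rintro ⟨i, k⟩ ⟨j, l⟩ ⟨s, m⟩ hx hy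
    obtain rfl : s = i := endShiftMap_fst hx
    obtain rfl : s = j := endShiftMap_fst hy
    rw [le_antisymm ((endShiftMap_le_iff hx hy).1 le_rfl) ((endShiftMap_le_iff hy hx).1 le_rfl)]
  · rintro ⟨i, k⟩ ⟨j, l⟩ ⟨s, m⟩ ⟨t, p⟩ hxy hx hy
    obtain rfl : s = i := endShiftMap_fst hx
    obtain rfl : t = j := endShiftMap_fst hy
    refine hxy.imp id fun ⟨hst, hkl⟩ => ?_
    obtain rfl : s = t := hst
    exact ⟨rfl, (endShiftMap_le_iff hx hy).2 hkl⟩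

end Realization

/-- The quotient of `IO_∞(ℤ^n_lex)` by its least group congruence `σ` is isomorphic to
`(ℤ(+))^{2n}`: there is a map `H` assigning to each `α ∈ IO_∞(ℤ^n_lex)` and each line
`i` the pair `(a_i⁻(α), a_i⁺(α))` of its eventual translation constants (these exist),
and `H` is additive (`H(α·β) = H(α) + H(β)`, in particular `α·β ∈ IO_∞(ℤ^n_lex)`),
surjective onto `(ℤ × ℤ)^n ≅ ℤ^{2n}`, and `H(α) = H(β)` iff `α σ β`. -/
theorem stmt13 (n : ℕ) (hn : 0 < n) :
    ∃ H : {f : Fin n × ℤ → Option (Fin n × ℤ) // IOmap (lexLe n) f} → (Fin n → ℤ × ℤ),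
      (∀ f : {f : Fin n × ℤ → Option (Fin n × ℤ) // IOmap (lexLe n) f}, ∀ i : Fin n,
        (∃ N : ℤ, ∀ k : ℤ, k ≤ N → ∃ m : ℤ, f.1 (i, k) = some (i, m) ∧ m - k = (H f i).1) ∧
        (∃ N : ℤ, ∀ k : ℤ, N ≤ k → ∃ m : ℤ, f.1 (i, k) = some (i, m) ∧ m - k = (H f i).2)) ∧
      (∀ f g : {f : Fin n × ℤ → Option (Fin n × ℤ) // IOmap (lexLe n) f},
        ∃ h : IOmap (lexLe n) (PComp f.1 g.1), H ⟨PComp f.1 g.1, h⟩ = H f + H g) ∧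
      Function.Surjective H ∧
      (∀ f g : {f : Fin n × ℤ → Option (Fin n × ℤ) // IOmap (lexLe n) f},
        H f = H g ↔
          ∃ e, IOmap (lexLe n) e ∧ PComp e e = e ∧ PComp f.1 e = PComp g.1 e) := by
  choose H hH using fun f : {f // IOmap (lexLe n) f} => f.2.exists_hasEndShifts
  have hH_comp (f g : {f // IOmap (lexLe n) f}) :
      H ⟨PComp f.1 g.1, f.2.comp g.2⟩ = H f + H g := (hH _).unique ((hH f).comp (hH g))
  refine ⟨H, fun f i => ⟨?_, ?_⟩, fun f g => ⟨_, hH_comp f g⟩, fun v => ?_, fun f g => ⟨?_, ?_⟩⟩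
  · exact eventually_atBot.1 ((hH f i).1.mono fun k hk => ⟨_, hk, add_sub_cancel_left k _⟩)
  · exact eventually_atTop.1 ((hH f i).2.mono fun k hk => ⟨_, hk, add_sub_cancel_left k _⟩)
  · exact ⟨⟨_, ioMap_endShiftMap v⟩, (hH _).unique (hasEndShifts_endShiftMap v)⟩
  · exact fun hfg => exists_idempotent_pComp_eq ((hH f).eventuallyEq (hfg ▸ hH g))
  · rintro ⟨e, he, -, hfg⟩
    refine add_right_cancel (b := H ⟨e, he⟩) ?_
    rw [← hH_comp, ← hH_comp]
    exact congrArg H (Subtype.ext hfg)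
end
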